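/- Let $n \ge 1$, let $C$ be a symmetric $n \times n$ real matrix, and let $X = \begin{pmatrix} U & Y \\ Y^\top & V \end{pmatrix}$ be a symmetric positive semidefinite $2n \times 2n$ matrix with $n \times n$ blocks, all of whose entries are nonnegative, and with $\sum_{i,j} X_{ij} = 1$. Set $W = U - Y - Y^\top + V$ and $u = (U + Y + Y^\top + V)e$, where $e \in \mathbb{R}^n$ is the all-ones vector. Then: (i) $W$ is positive semidefinite; (ii) $u_i \ge 0$ for all $i$ and $\sum_i u_i = 1$; (iii) $\operatorname{Diag}(u) - W$ is positive semidefinite; and (iv) $C \bullet W = Q_C \bullet X$, where $Q_C = \begin{pmatrix} C & -C \\ -C & C \end{pmatrix}$. -/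

import Mathlib

open Matrix

/-- If a symmetric matrix `S` dominates `W` entrywise in absolute value, then the quadratic form of
`diagonal (S *ᵥ 1) - W` is nonnegative. -/
theorem dotProduct_diagonal_rowSum_sub_mulVec_nonneg {ι : Type*} [Fintype ι] [DecidableEq ι]
    {S W : Matrix ι ι ℝ} (hS : S.IsSymm) (hW : ∀ i j, |W i j| ≤ S i j) (x : ι → ℝ) :
    0 ≤ x ⬝ᵥ (diagonal (S *ᵥ fun _ => (1 : ℝ)) - W) *ᵥ x := by
  have expand : x ⬝ᵥ (diagonal (S *ᵥ fun _ => (1 : ℝ)) - W) *ᵥ x =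
      ∑ i, ∑ j, (S i j * x i ^ 2 - W i j * (x i * x j)) := by
    rw [sub_mulVec, dotProduct_sub]
    simp only [dotProduct, mulVec_diagonal]
    simp only [dotProduct, mulVec, mul_one, Finset.sum_sub_distrib,
      Finset.mul_sum, Finset.sum_mul]
    congr 1 <;> exact Finset.sum_congr rfl fun i _ => Finset.sum_congr rfl fun j _ => by ring
  have swap : ∑ i, ∑ j, S i j * x i ^ 2 = ∑ i, ∑ j, S i j * x j ^ 2 := by
    rw [Finset.sum_comm]
    exact Finset.sum_congr rfl fun i _ => Finset.sum_congr rfl fun j _ => by rw [hS.apply]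
  have symmetrize : ∑ i, ∑ j, (S i j * x i ^ 2 - W i j * (x i * x j)) =
      ∑ i, ∑ j, (S i j * ((x i ^ 2 + x j ^ 2) / 2) - W i j * (x i * x j)) := by
    have average : ∑ i, ∑ j, S i j * ((x i ^ 2 + x j ^ 2) / 2) =
        (∑ i, ∑ j, S i j * x i ^ 2 + ∑ i, ∑ j, S i j * x j ^ 2) / 2 := by
      simp only [← Finset.sum_add_distrib, Finset.sum_div]
      exact Finset.sum_congr rfl fun i _ => Finset.sum_congr rfl fun j _ => by ring
    simp only [Finset.sum_sub_distrib, average]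
    linarith
  rw [expand, symmetrize]
  refine Finset.sum_nonneg fun i _ => Finset.sum_nonneg fun j _ => ?_
  obtain ⟨hl, hu⟩ := abs_le.mp (hW i j)
  nlinarith [mul_nonneg (sub_nonneg.mpr hu) (sq_nonneg (x i + x j)),
    mul_nonneg (neg_le_iff_add_nonneg.mp hl) (sq_nonneg (x i - x j))]

/-- Key construction in the proof of Theorem 1: from a feasible `X = [[U, Y], [Yᵀ, V]]`
for the copositive relaxation, `W = U - Y - Yᵀ + V` and `u = (U + Y + Yᵀ + V)e`
are feasible for Nesterov's relaxation, with `C • W = Q_C • X`. -/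
theorem stmt_6 (n : ℕ) (hn : 1 ≤ n) (C : Matrix (Fin n) (Fin n) ℝ) (hC : Cᵀ = C)
    (U Y V : Matrix (Fin n) (Fin n) ℝ)
    (hsym : (fromBlocks U Y Yᵀ V)ᵀ = fromBlocks U Y Yᵀ V)
    (hpsd : ∀ x : Fin n ⊕ Fin n → ℝ, 0 ≤ x ⬝ᵥ (fromBlocks U Y Yᵀ V) *ᵥ x)
    (hnn : ∀ i j, 0 ≤ fromBlocks U Y Yᵀ V i j)
    (hsum : (∑ i : Fin n ⊕ Fin n, ∑ j : Fin n ⊕ Fin n, fromBlocks U Y Yᵀ V i j) = 1) :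
    (∀ x : Fin n → ℝ, 0 ≤ x ⬝ᵥ (U - Y - Yᵀ + V) *ᵥ x) ∧
    ((∀ i, 0 ≤ ((U + Y + Yᵀ + V) *ᵥ (fun _ => (1 : ℝ))) i) ∧
      (∑ i, ((U + Y + Yᵀ + V) *ᵥ (fun _ => (1 : ℝ))) i) = 1) ∧
    (∀ x : Fin n → ℝ,
      0 ≤ x ⬝ᵥ (Matrix.diagonal ((U + Y + Yᵀ + V) *ᵥ (fun _ => (1 : ℝ)))
                  - (U - Y - Yᵀ + V)) *ᵥ x) ∧
    (∑ i, ∑ j, C i j * (U - Y - Yᵀ + V) i j) =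
      ∑ i : Fin n ⊕ Fin n, ∑ j : Fin n ⊕ Fin n,
        fromBlocks C (-C) (-C) C i j * fromBlocks U Y Yᵀ V i j := by
  obtain ⟨hU, -, -, hV⟩ : Uᵀ = U ∧ Yᵀᵀ = Y ∧ Yᵀ = Yᵀ ∧ Vᵀ = V := by
    rwa [fromBlocks_transpose, fromBlocks_inj] at hsym
  have nonnegU : ∀ i j, 0 ≤ U i j := fun i j => hnn (.inl i) (.inl j)
  have nonnegY : ∀ i j, 0 ≤ Y i j := fun i j => hnn (.inl i) (.inr j)
  have nonnegV : ∀ i j, 0 ≤ V i j := fun i j => hnn (.inr i) (.inr j)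
  refine ⟨fun x => ?_, ⟨fun i => ?_, ?_⟩, fun x => ?_, ?_⟩
  · have h := hpsd (Sum.elim x (-x))
    rw [fromBlocks_mulVec, sumElim_dotProduct_sumElim] at h
    simp only [Sum.elim_comp_inl, Sum.elim_comp_inr, mulVec_neg, neg_dotProduct, dotProduct_add,
      dotProduct_neg] at h
    simp only [add_mulVec, sub_mulVec, dotProduct_add, dotProduct_sub]
    linarith
  · simp only [mulVec, dotProduct, mul_one, Matrix.add_apply, transpose_apply]
    exact Finset.sum_nonneg fun j _ => by
      linarith [nonnegU i j, nonnegY i j, nonnegY j i, nonnegV i j]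
  · refine Eq.trans ?_ hsum
    simp only [mulVec, dotProduct, mul_one, Matrix.add_apply, Fintype.sum_sum_type,
      fromBlocks_apply₁₁, fromBlocks_apply₁₂, fromBlocks_apply₂₁, fromBlocks_apply₂₂,
      Finset.sum_add_distrib]
    ring
  · refine dotProduct_diagonal_rowSum_sub_mulVec_nonneg ?_ (fun i j => ?_) x
    · simp only [IsSymm, transpose_add, transpose_transpose, hU, hV]
      abel
    · simp only [Matrix.add_apply, Matrix.sub_apply, transpose_apply]
      rw [abs_le]
      constructor <;> linarith [nonnegU i j, nonnegY i j, nonnegY j i, nonnegV i j]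
  · simp only [Fintype.sum_sum_type, fromBlocks_apply₁₁, fromBlocks_apply₁₂, fromBlocks_apply₂₁,
      fromBlocks_apply₂₂, Matrix.add_apply, Matrix.sub_apply, Matrix.neg_apply,
      mul_add, mul_sub, neg_mul, Finset.sum_add_distrib, Finset.sum_sub_distrib,
      Finset.sum_neg_distrib]
    ring
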